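/- arXiv:1711.10532 — 2 statements merged into one kernel-verified Lean document; each statement's English description precedes it below -/
import Mathlib

section
/- Uniform bounds on multiplier, action and energy along Floer trajectories of a homotopy (Proposition 3.3): Let 𝖧 be admissible, K a nonempty compact set, and let Γ={(H_s,J_s)}_{s∈ℝ} be a smooth homotopy, constant in s outside [0,1], with H_s∈𝖧+𝒪(𝖧) for all s and each J_s a 2-parameter family of ω₀-compatible almost complex structures with ‖J‖∞<∞. Let ε₀>0 and c̃>0 be constants such that for every H∈𝖧+𝒪(𝖧), ‖∇𝒜^H(v,η)‖<ε₀ implies |η|≤c̃(|𝒜^H(v,η)|+1), and assume (c̃+‖J‖∞^{3/2}/ε₀)·‖∂_sH_s‖∞<1/8. Let u(s)=(v(s,·),η(s)) be a Floer trajectory of Γ with lim_{s→−∞}𝒜^{H₀}(u(s))≥a and lim_{s→+∞}𝒜^{H₁}(u(s))≤b. Then: sup_{s∈ℝ}|η(s)|≤𝔶:=(8/7)(c̃(max{|a|,|b|}+1)+((b−a)/ε₀)‖J‖∞^{3/2}); sup_{s∈ℝ}|𝒜^{H_s}(u(s))|≤𝔞:=(1/7)(8·max{|a|,|b|}+1+|b−a|);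 and the energy ∫_ℝ(‖∂_sv(s)‖²_{L²(S¹)}+|∂_sη(s)|²)ds≤𝔢:=(1/7)‖J‖∞(8|b−a|+max{|a|,|b|}+1). In particular the bounds depend only on a,b, the common admissibility parameters of the family, and continuously on ‖J‖∞. -/
open MeasureTheory intervalIntegral Set
open scoped RealInnerProductSpace Topology

noncomputable section

/-- Phase space `ℝ^{2n}`, realized as `ℂ^n` with its real inner product. -/
abbrev E (n : ℕ) := EuclideanSpace ℂ (Fin n)

/-- The standard linear complex structure `J₀` (multiplication by `i`). -/
def J0 {n : ℕ} (x : E n) : E n := Complex.I • x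

/-- The standard symplectic form `ω₀(u,w) = ⟨J₀u, w⟩`. -/
def om {n : ℕ} (u w : E n) : ℝ := @inner ℝ _ _ (J0 u) w

/-- The Hamiltonian vector field `X^H = J₀ ∇H`. -/
def XH {n : ℕ} (H : E n → ℝ) (x : E n) : E n := J0 (gradient H x)

/-- A loop: a smooth 1-periodic map `ℝ → ℝ^{2n}`. -/
def IsLoop {n : ℕ} (v : ℝ → E n) : Prop := ContDiff ℝ (⊤ : ℕ∞) v ∧ ∀ t, v (t + 1) = v t

/-- The `L²` norm on loops. -/
def L2 {n : ℕ} (v : ℝ → E n) : ℝ := Real.sqrt (∫ t in (0:ℝ)..1, ‖v t‖ ^ 2)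

/-- The Rabinowitz action functional. -/
def RabAction {n : ℕ} (H : E n → ℝ) (v : ℝ → E n) (η : ℝ) : ℝ :=
  (∫ t in (0:ℝ)..1, (1 / 2) * om (v t) (deriv v t)) - η * ∫ t in (0:ℝ)..1, H (v t)

/-- The norm `‖∇𝒜^H(v,η)‖ = ‖∂_t v − η X^H(v)‖_{L²} + |∫₀¹ H(v)|` of the `L²` gradient. -/
def gradNorm {n : ℕ} (H : E n → ℝ) (v : ℝ → E n) (η : ℝ) : ℝ :=
  L2 (fun t => deriv v t - η • XH H (v t)) + |∫ t in (0:ℝ)..1, H (v t)|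

/-- A Liouville vector field on a set `U`. -/
def IsLiouvilleOn {n : ℕ} (X : E n → E n) (U : Set (E n)) : Prop :=
  ∀ x ∈ U, ∀ u w : E n, om (fderiv ℝ X x u) w + om u (fderiv ℝ X x w) = om u w

/-- Condition (H1). -/
def SatH1 {n : ℕ} (H : E n → ℝ) (c₁ c₂ c₃ : ℝ) : Prop :=
  ∃ X : E n → E n, ContDiff ℝ (⊤ : ℕ∞) X ∧ IsLiouvilleOn X Set.univ ∧
    (∀ x, ‖X x‖ ≤ c₁ * (‖x‖ + 1)) ∧ ∀ x, fderiv ℝ H x (X x) ≥ c₂ * ‖x‖ ^ 2 - c₃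

/-- Condition (H2). -/
def SatH2 {n : ℕ} (H : E n → ℝ) (L : ℝ) : Prop :=
  ∀ x, ‖iteratedFDeriv ℝ 3 H x‖ * ‖x‖ ≤ L

/-- Condition (H3). -/
def SatH3 {n : ℕ} (H : E n → ℝ) (c₄ c₅ ν : ℝ) : Prop :=
  ∃ X : E n → E n, IsLiouvilleOn X (H ⁻¹' Ioo (-ν) ν) ∧
    (∀ x ∈ H ⁻¹' Ioo (-ν) ν, ‖X x‖ ≤ c₄ * (‖x‖ ^ 2 + 1)) ∧
    ∀ x ∈ H ⁻¹' Ioo (-ν) ν, fderiv ℝ H x (X x) ≥ c₅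

/-- Admissible Hamiltonians. -/
def Admissible {n : ℕ} (H : E n → ℝ) : Prop :=
  ContDiff ℝ (⊤ : ℕ∞) H ∧ ∃ c₁ c₂ c₃ L c₄ c₅ ν : ℝ,
    0 < c₁ ∧ 0 < c₂ ∧ 0 ≤ c₃ ∧ 0 ≤ L ∧ 0 < c₄ ∧ 0 < c₅ ∧ 0 < ν ∧
    SatH1 H c₁ c₂ c₃ ∧ SatH2 H L ∧ SatH3 H c₄ c₅ ν

/-- Uniform bound on the Hessian. -/
def HessBound {n : ℕ} (H : E n → ℝ) (M : ℝ) : Prop :=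
  ∀ x, ‖iteratedFDeriv ℝ 2 H x‖ ≤ M

/-- Linear growth of the gradient. -/
def GradBound {n : ℕ} (H : E n → ℝ) (M h₁ : ℝ) : Prop :=
  ∀ x, ‖gradient H x‖ ≤ h₁ + M * ‖x‖

/-- `J₀` as a continuous linear map. -/
def J0L (n : ℕ) : E n →L[ℝ] E n := Complex.I • (ContinuousLinearMap.id ℝ (E n))

/-- An `ω₀`-compatible linear complex structure. -/
def CompatJ {n : ℕ} (J : E n →L[ℝ] E n) : Prop :=
  (∀ ξ, J (J ξ) = -ξ) ∧ (∀ u w, om (J u) (J w) = om u w) ∧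
    ∀ ξ : E n, ξ ≠ 0 → 0 < om ξ (J ξ)

/-- Critical points of the Rabinowitz action functional `𝒜^H`. -/
def IsCrit {n : ℕ} (H : E n → ℝ) (v : ℝ → E n) (η : ℝ) : Prop :=
  IsLoop v ∧ (∀ t, deriv v t = η • XH H (v t)) ∧ ∀ t, H (v t) = 0

/-- Condition (PO). -/
def SatPO {n : ℕ} (H : E n → ℝ) : Prop :=
  ∀ m : ℕ, ∃ Km : Set (E n), IsCompact Km ∧
    ∀ v η, IsCrit H v η → 0 < |RabAction H v η| → |RabAction H v η| ≤ m → ∀ t, v t ∈ Km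

/-- Membership in `𝒞(𝒜^H, N)`. -/
def InCritN {n : ℕ} (H : E n → ℝ) (N : Set (E n)) (v : ℝ → E n) (η : ℝ) : Prop :=
  IsCrit H v η ∧ (0 < |RabAction H v η| ∨ ((∃ p ∈ N, ∀ t, v t = p) ∧ η = 0))

/-- `W^{1,2}` distance between loops. -/
def W12dist {n : ℕ} (v w : ℝ → E n) : ℝ :=
  L2 (fun t => v t - w t) + L2 (fun t => deriv v t - deriv w t)

/-- A smooth homotopy of Hamiltonians and compatible almost complex structures,
constant outside `[0,1]`. -/
def IsHomotopy {n : ℕ} (Hs : ℝ → E n → ℝ)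
    (Js : ℝ → ℝ → E n → ℝ → (E n →L[ℝ] E n)) : Prop :=
  ContDiff ℝ (⊤ : ℕ∞) (fun p : ℝ × E n => Hs p.1 p.2) ∧
  ContDiff ℝ (⊤ : ℕ∞) (fun p : ℝ × ℝ × E n × ℝ => Js p.1 p.2.1 p.2.2.1 p.2.2.2) ∧
  (∀ s ≤ (0:ℝ), Hs s = Hs 0 ∧ Js s = Js 0) ∧
  (∀ s, (1:ℝ) ≤ s → Hs s = Hs 1 ∧ Js s = Js 1) ∧
  ∀ s t x η, CompatJ (Js s t x η)

/-- The `Cˡ` norms of the almost complex structures are uniformly bounded for every `l`. -/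
def JClBounded {n : ℕ} (Js : ℝ → ℝ → E n → ℝ → (E n →L[ℝ] E n)) : Prop :=
  ∀ l : ℕ, ∃ B : ℝ, ∀ s : ℝ, ∀ p : ℝ × E n × ℝ,
    ‖iteratedFDeriv ℝ l (fun q : ℝ × E n × ℝ => Js s q.1 q.2.1 q.2.2) p‖ ≤ B

/-- `JN` plays the role of `‖J‖_∞`: comparison between the metrics `g_{J_s}` and the flat one. -/
def JBound {n : ℕ} (Js : ℝ → ℝ → E n → ℝ → (E n →L[ℝ] E n)) (JN : ℝ) : Prop :=
  1 ≤ JN ∧ ∀ s t x η (ξ : E n),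
    JN⁻¹ * ‖ξ‖ ^ 2 ≤ om ξ (Js s t x η ξ) ∧ om ξ (Js s t x η ξ) ≤ JN * ‖ξ‖ ^ 2

/-- `D` bounds `‖∂_s H_s‖_∞`. -/
def dsHBound {n : ℕ} (Hs : ℝ → E n → ℝ) (D : ℝ) : Prop :=
  ∀ x : E n, ∀ s ∈ Icc (0:ℝ) 1, |deriv (fun σ => Hs σ x) s| ≤ D

/-- A Floer trajectory of the homotopy `Γ = (H_s, J_s)`. -/
def FloerTraj {n : ℕ} (Hs : ℝ → E n → ℝ) (Js : ℝ → ℝ → E n → ℝ → (E n →L[ℝ] E n))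
    (v : ℝ → ℝ → E n) (η : ℝ → ℝ) : Prop :=
  ContDiff ℝ (⊤ : ℕ∞) (fun p : ℝ × ℝ => v p.1 p.2) ∧ ContDiff ℝ (⊤ : ℕ∞) η ∧ (∀ s, IsLoop (v s)) ∧
  (∀ s t, deriv (fun σ => v σ t) s
      = -((Js s t (v s t) (η s)) (deriv (v s) t - η s • XH (Hs s) (v s t)))) ∧
  ∀ s, deriv η s = -∫ t in (0:ℝ)..1, Hs s (v s t)

/-- Convergence in `W^{1,2}(S¹) × ℝ` as `s → -∞`. -/
def ConvAtBot {n : ℕ} (v : ℝ → ℝ → E n) (η : ℝ → ℝ) (lv : ℝ → E n) (lη : ℝ) : Prop :=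
  Filter.Tendsto (fun s => W12dist (v s) lv + |η s - lη|) Filter.atBot (nhds 0)

/-- Convergence in `W^{1,2}(S¹) × ℝ` as `s → +∞`. -/
def ConvAtTop {n : ℕ} (v : ℝ → ℝ → E n) (η : ℝ → ℝ) (lv : ℝ → E n) (lη : ℝ) : Prop :=
  Filter.Tendsto (fun s => W12dist (v s) lv + |η s - lη|) Filter.atTop (nhds 0)

/-- Membership in the family `HH + 𝒪(HH)`: a compactly supported (in `K`) perturbation of `HH`
satisfying (H1), (H2), (H3) with the common set of parameters, together with the common
quadratic growth constants. -/
def InFamily {n : ℕ} (HH : E n → ℝ) (K : Set (E n))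
    (c₁ c₂ c₃ L c₄ c₅ ν M h₁ : ℝ) (H : E n → ℝ) : Prop :=
  ContDiff ℝ (⊤ : ℕ∞) H ∧ (∀ x ∉ K, H x = HH x) ∧
  SatH1 H c₁ c₂ c₃ ∧ SatH2 H L ∧ SatH3 H c₄ c₅ ν ∧ HessBound H M ∧ GradBound H M h₁

lemma om_eq_sum {n : ℕ} (x y : E n) :
    om x y = ∑ i, ((x i).re * (y i).im - (x i).im * (y i).re) := by
  unfold om J0
  rw [PiLp.inner_apply]
  refine Finset.sum_congr rfl fun i _ => ?_
  rw [Complex.inner]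
  simp
  ring

lemma om_antisymm {n : ℕ} (x y : E n) : om x y = -om y x := by
  rw [om_eq_sum, om_eq_sum, ← Finset.sum_neg_distrib]
  refine Finset.sum_congr rfl fun i _ => ?_
  ring

lemma inner_J0_J0 {n : ℕ} (x y : E n) : @inner ℝ _ _ (J0 x) (J0 y) = @inner ℝ _ _ x y := by
  unfold J0
  rw [PiLp.inner_apply, PiLp.inner_apply]
  refine Finset.sum_congr rfl fun i _ => ?_
  rw [Complex.inner, Complex.inner]
  simp

lemma om_XH {n : ℕ} (H : E n → ℝ) (x u : E n) : om u (XH H x) = fderiv ℝ H x u := by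
  unfold om XH
  rw [inner_J0_J0, real_inner_comm]
  unfold gradient
  simp

/-- `om` as a continuous bilinear map. -/
def omL (n : ℕ) : E n →L[ℝ] E n →L[ℝ] ℝ := (innerSL ℝ).comp (J0L n)

lemma omL_apply {n : ℕ} (x y : E n) : omL n x y = om x y := by
  simp [omL, om, J0, J0L]

lemma hasDerivAt_param_integral (g : ℝ × ℝ → ℝ) (hg : ContDiff ℝ 1 g) (s : ℝ) :
    HasDerivAt (fun σ => ∫ t in (0:ℝ)..1, g (σ, t))
      (∫ t in (0:ℝ)..1, fderiv ℝ g (s, t) (1, 0)) s := by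
  have hc : Continuous (fun p : ℝ × ℝ => fderiv ℝ g p (1, 0)) :=
    (hg.continuous_fderiv one_ne_zero).clm_apply continuous_const
  obtain ⟨C, hC⟩ := ((isCompact_Icc (a := s - 1) (b := s + 1)).prod
    (isCompact_Icc (a := (0:ℝ)) (b := 1))).exists_bound_of_continuousOn hc.continuousOn
  have hgc := hg.continuous
  refine (intervalIntegral.hasDerivAt_integral_of_dominated_loc_of_deriv_le
    (F := fun σ t => g (σ, t)) (F' := fun σ t => fderiv ℝ g (σ, t) (1, 0))
    (bound := fun _ => C) (s := Icc (s - 1) (s + 1)) (Icc_mem_nhds (by linarith) (by linarith))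
    ?_ ?_ ?_ ?_ ?_ ?_).2
  · refine Filter.Eventually.of_forall fun σ => ?_
    exact (by fun_prop : Continuous fun t => g (σ, t)).aestronglyMeasurable
  · exact (by fun_prop : Continuous fun t => g (s, t)).intervalIntegrable _ _
  · exact (hc.comp (by fun_prop : Continuous fun t : ℝ => (s, t))).aestronglyMeasurable
  · refine Filter.Eventually.of_forall fun t ht σ hσ => ?_
    rw [uIoc_of_le zero_le_one] at ht
    exact hC (σ, t) ⟨hσ, ht.1.le, ht.2⟩
  · exact intervalIntegrable_const
  · refine Filter.Eventually.of_forall fun t ht σ hσ => ?_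
    have h1 : HasFDerivAt g (fderiv ℝ g (σ, t)) (σ, t) :=
      (hg.differentiable one_ne_zero _).hasFDerivAt
    have h2 : HasDerivAt (fun σ : ℝ => (σ, t)) ((1:ℝ), (0:ℝ)) σ :=
      (hasDerivAt_id σ).prodMk (hasDerivAt_const σ t)
    exact h1.comp_hasDerivAt σ h2

/-- Abstract energy estimates. -/
lemma energy_abstract (f e r : ℝ → ℝ) (R A B : ℝ) (he : Continuous e) (hr : Continuous r)
    (hf : ∀ s, HasDerivAt f (e s - r s) s) (he0 : ∀ s, 0 ≤ e s)
    (hr1 : ∀ s ∈ Icc (0:ℝ) 1, |r s| ≤ R) (hr0 : ∀ s ∉ Icc (0:ℝ) 1, r s = 0)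
    (hA : Filter.Tendsto f Filter.atBot (nhds A)) (hB : Filter.Tendsto f Filter.atTop (nhds B)) :
    (∀ s, A - R ≤ f s ∧ f s ≤ B + R) ∧
      ∀ x y, x ≤ y → ∫ s in x..y, e s ≤ B - A + R := by
  have hint : ∀ x y, x ≤ y → ∫ s in x..y, r s ≤ R := by
    intro x y hxy
    have hi : Integrable ((Icc (0:ℝ) 1).indicator fun _ => R) :=
      (integrable_indicator_iff measurableSet_Icc).2 (by simp)
    have hR : 0 ≤ R := (abs_nonneg _).trans (hr1 0 ⟨le_rfl, zero_le_one⟩)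
    calc ∫ s in x..y, r s ≤ ∫ s in x..y, (Icc (0:ℝ) 1).indicator (fun _ => R) s := by
          refine integral_mono hxy (hr.intervalIntegrable _ _) hi.intervalIntegrable fun s => ?_
          by_cases hs : s ∈ Icc (0:ℝ) 1
          · simp only [indicator_of_mem hs]; exact (le_abs_self _).trans (hr1 s hs)
          · simp only [indicator_of_notMem hs]; exact (hr0 s hs).le
      _ ≤ ∫ s, (Icc (0:ℝ) 1).indicator (fun _ => R) s := by
          rw [integral_of_le hxy]
          refine setIntegral_le_integral hi (Filter.Eventually.of_forall fun s => ?_)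
          exact indicator_nonneg (fun _ _ => hR) s
      _ = R := by
          rw [MeasureTheory.integral_indicator measurableSet_Icc]; simp
  have key : ∀ x y, x ≤ y → ∫ s in x..y, e s ≤ f y - f x + R := by
    intro x y hxy
    have h1 : ∫ s in x..y, (e s - r s) = f y - f x :=
      integral_eq_sub_of_hasDerivAt (fun s _ => hf s) ((he.sub hr).intervalIntegrable _ _)
    rw [integral_sub (he.intervalIntegrable _ _) (hr.intervalIntegrable _ _)] at h1
    linarith [hint x y hxy]
  have key0 : ∀ x y, x ≤ y → 0 ≤ ∫ s in x..y, e s := fun x y hxy =>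
    integral_nonneg hxy fun s _ => he0 s
  refine ⟨fun s => ⟨?_, ?_⟩, ?_⟩
  · have : A ≤ f s + R := le_of_tendsto hA (by
      filter_upwards [Filter.eventually_le_atBot s] with x hx
      linarith [key x s hx, key0 x s hx])
    linarith
  · have : f s - R ≤ B := ge_of_tendsto hB (by
      filter_upwards [Filter.eventually_ge_atTop s] with x hx
      linarith [key s x hx, key0 s x hx])
    linarith
  · intro x y hxy
    have h1 : ∀ y', y ≤ y' → A ≤ f y' + R - ∫ s in x..y, e s := by
      intro y' hy'
      refine le_of_tendsto hA ?_
      filter_upwards [Filter.eventually_le_atBot x] with x' hx'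
      have a1 := integral_add_adjacent_intervals (he.intervalIntegrable (μ := volume) x' x)
        (he.intervalIntegrable x y)
      have a2 := integral_add_adjacent_intervals (he.intervalIntegrable (μ := volume) x' y)
        (he.intervalIntegrable y y')
      linarith [key x' y' (by linarith), key0 x' x hx', key0 y y' hy']
    have : A - R + ∫ s in x..y, e s ≤ B := ge_of_tendsto hB (by
      filter_upwards [Filter.eventually_ge_atTop y] with y' hy'
      linarith [h1 y' hy'])
    linarith

/-- Abstract bound on the multiplier. -/
lemma eta_abstract (η e : ℝ → ℝ) (C κ δ W : ℝ) (hη : ContDiff ℝ 1 η) (he : Continuous e)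
    (hδ : 0 < δ) (hκ : 0 ≤ κ)
    (hW : ∀ x y, x ≤ y → ∫ s in x..y, e s ≤ W)
    (hbad : ∀ s, C < |η s| → δ ≤ e s ∧ |deriv η s| ≤ 2 * κ * e s) (s : ℝ) :
    |η s| ≤ C + κ * W := by
  have hηc := hη.continuous
  have hdc : Continuous (deriv η) := hη.continuous_deriv le_rfl
  have hcl : IsClosed {σ | |η σ| ≤ C} := isClosed_le hηc.abs continuous_const
  have hW0 : 0 ≤ W := by simpa using hW 0 0 le_rfl
  -- existence of good points
  have hex : ∀ x y, x ≤ y → W < δ * (y - x) → ∃ σ ∈ Icc x y, |η σ| ≤ C := by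
    intro x y hxy h
    by_contra! hcon
    have : ∫ _ in x..y, δ ≤ ∫ s in x..y, e s :=
      integral_mono_on hxy intervalIntegrable_const (he.intervalIntegrable _ _)
        fun σ hσ => (hbad σ (hcon σ hσ)).1
    rw [intervalIntegral.integral_const, smul_eq_mul] at this
    linarith [hW x y hxy]
  have hvar : ∀ x y, x ≤ y → (∀ σ ∈ Ioo x y, C < |η σ|) → |η y - η x| ≤ 2 * κ * ∫ s in x..y, e s := by
    intro x y hxy h
    have h1 : ∫ s in x..y, deriv η s = η y - η x :=
      integral_eq_sub_of_hasDerivAt (fun s _ => (hη.differentiable one_ne_zero s).hasDerivAt)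
        (hdc.intervalIntegrable _ _)
    rw [← h1, ← intervalIntegral.integral_const_mul]
    refine (abs_integral_le_integral_abs hxy).trans ?_
    refine integral_mono_on_of_le_Ioo hxy (hdc.abs.intervalIntegrable _ _)
      ((continuous_const.mul he).intervalIntegrable _ _) fun σ hσ => (hbad σ (h σ hσ)).2
  have hlen : W < δ * ((W + 1) / δ) := by field_simp; linarith
  have hpos : 0 < (W + 1) / δ := by positivity
  -- right
  obtain ⟨y, hy, hyC, hyb⟩ : ∃ y, s ≤ y ∧ |η y| ≤ C ∧ ∀ σ ∈ Ioo s y, C < |η σ| := by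
    obtain ⟨y0, hy0, hy0C⟩ := hex s (s + (W + 1) / δ) (by linarith) (by
      rw [add_sub_cancel_left]; exact hlen)
    set S := {σ | |η σ| ≤ C} ∩ Ici s with hS
    have hne : S.Nonempty := ⟨y0, hy0C, hy0.1⟩
    have hbd : BddBelow S := ⟨s, fun z hz => hz.2⟩
    have hm : sInf S ∈ S := (hcl.inter isClosed_Ici).csInf_mem hne hbd
    refine ⟨sInf S, hm.2, hm.1, fun σ hσ => ?_⟩
    by_contra! hc
    exact absurd (csInf_le hbd ⟨hc, hσ.1.le⟩) (not_le.2 hσ.2)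
  obtain ⟨x, hx, hxC, hxb⟩ : ∃ x, x ≤ s ∧ |η x| ≤ C ∧ ∀ σ ∈ Ioo x s, C < |η σ| := by
    obtain ⟨y0, hy0, hy0C⟩ := hex (s - (W + 1) / δ) s (by linarith) (by
      rw [sub_sub_cancel]; exact hlen)
    set S := {σ | |η σ| ≤ C} ∩ Iic s with hS
    have hne : S.Nonempty := ⟨y0, hy0C, hy0.2⟩
    have hbd : BddAbove S := ⟨s, fun z hz => hz.2⟩
    have hm : sSup S ∈ S := (hcl.inter isClosed_Iic).csSup_mem hne hbd
    refine ⟨sSup S, hm.2, hm.1, fun σ hσ => ?_⟩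
    by_contra! hc
    exact absurd (le_csSup hbd ⟨hc, hσ.2.le⟩) (not_le.2 hσ.1)
  have h1 := hvar s y hy hyb
  have h2 := hvar x s hx hxb
  have h3 := integral_add_adjacent_intervals (he.intervalIntegrable (μ := volume) x s)
        (he.intervalIntegrable s y)
  have h4 := mul_le_mul_of_nonneg_left (hW x y (hx.trans hy)) hκ
  rw [← h3, mul_add] at h4
  have h5 : |η s| ≤ |η y| + |η y - η s| := by
    rw [abs_sub_comm]
    have := abs_add_le (η y) (η s - η y); simpa using this
  have h6 : |η s| ≤ |η x| + |η s - η x| := by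
    have := abs_add_le (η x) (η s - η x); simpa using this
  linarith

lemma deriv_fst {F : Type*} [NormedAddCommGroup F] [NormedSpace ℝ F] (V : ℝ × ℝ → F)
    (hV : Differentiable ℝ V) (s t : ℝ) :
    HasDerivAt (fun σ => V (σ, t)) (fderiv ℝ V (s, t) (1, 0)) s :=
  (hV (s, t)).hasFDerivAt.comp_hasDerivAt s ((hasDerivAt_id s).prodMk (hasDerivAt_const s t))

lemma deriv_snd {F : Type*} [NormedAddCommGroup F] [NormedSpace ℝ F] (V : ℝ × ℝ → F)
    (hV : Differentiable ℝ V) (s t : ℝ) :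
    HasDerivAt (fun τ => V (s, τ)) (fderiv ℝ V (s, t) (0, 1)) t :=
  (hV (s, t)).hasFDerivAt.comp_hasDerivAt t ((hasDerivAt_const t s).prodMk (hasDerivAt_id t))

lemma area_deriv {n : ℕ} (V : ℝ × ℝ → E n) (hV : ContDiff ℝ (⊤ : ℕ∞) V)
    (hper : ∀ s t, V (s, t + 1) = V (s, t)) (s : ℝ) :
    HasDerivAt (fun σ => ∫ t in (0:ℝ)..1, (1 / 2) * om (V (σ, t)) (fderiv ℝ V (σ, t) (0, 1)))
      (∫ t in (0:ℝ)..1, om (fderiv ℝ V (s, t) (1, 0)) (fderiv ℝ V (s, t) (0, 1))) s := by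
  have hVd : Differentiable ℝ V := hV.differentiable (by simp)
  have hV' : ContDiff ℝ 1 (fderiv ℝ V) := (contDiff_infty.1 hV 2).fderiv_right (by norm_num)
  have hVd' : Differentiable ℝ (fderiv ℝ V) := hV'.differentiable one_ne_zero
  have hV1 : ContDiff ℝ 1 V := hV.of_le (by exact_mod_cast le_top)
  have hVc := hV.continuous
  have hVc' := hV'.continuous
  have hVc'' : Continuous (fderiv ℝ (fderiv ℝ V)) := hV'.continuous_fderiv one_ne_zero
  have hg : ContDiff ℝ 1 (fun p : ℝ × ℝ => (1 / 2 : ℝ) * omL n (V p) (fderiv ℝ V p (0, 1))) := by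
    fun_prop
  have h1 := hasDerivAt_param_integral _ hg s
  simp only [omL_apply] at h1
  convert h1 using 1
  -- compute derivative
  have hcomp : ∀ t, fderiv ℝ (fun p : ℝ × ℝ => (1 / 2 : ℝ) * om (V p) (fderiv ℝ V p (0, 1)))
      (s, t) (1, 0) = (1 / 2 : ℝ) * (om (V (s, t)) (fderiv ℝ (fderiv ℝ V) (s, t) (1, 0) (0, 1))
        + om (fderiv ℝ V (s, t) (1, 0)) (fderiv ℝ V (s, t) (0, 1))) := by
    intro t
    have e1 := deriv_fst _ (hg.differentiable one_ne_zero) s t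
    have e2 := deriv_fst V hVd s t
    have e3 := (deriv_fst (fderiv ℝ V) hVd' s t).clm_apply (hasDerivAt_const s ((0:ℝ), (1:ℝ)))
    have e4 := (((omL n).hasFDerivAt.comp_hasDerivAt s e2).clm_apply e3).const_mul (1 / 2 : ℝ)
    have := e1.unique e4
    simp only [omL_apply] at this
    rw [this]
    simp [omL_apply]
    ring
  have hbd : ∫ t in (0:ℝ)..1, (om (V (s, t)) (fderiv ℝ (fderiv ℝ V) (s, t) (1, 0) (0, 1))
      - om (fderiv ℝ V (s, t) (1, 0)) (fderiv ℝ V (s, t) (0, 1))) = 0 := by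
    have hd : ∀ t ∈ uIcc (0:ℝ) 1, HasDerivAt (fun t => omL n (V (s, t)) (fderiv ℝ V (s, t) (1, 0)))
        (om (V (s, t)) (fderiv ℝ (fderiv ℝ V) (s, t) (1, 0) (0, 1))
      - om (fderiv ℝ V (s, t) (1, 0)) (fderiv ℝ V (s, t) (0, 1))) t := by
      intro t _
      have e2 := deriv_snd V hVd s t
      have e3 := (deriv_snd (fderiv ℝ V) hVd' s t).clm_apply (hasDerivAt_const t ((1:ℝ), (0:ℝ)))
      have e4 := ((omL n).hasFDerivAt.comp_hasDerivAt t e2).clm_apply e3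
      refine e4.congr_deriv ?_
      have hsym : fderiv ℝ (fderiv ℝ V) (s, t) (1, 0) (0, 1)
          = fderiv ℝ (fderiv ℝ V) (s, t) (0, 1) (1, 0) :=
        ((contDiff_infty.1 hV 2).contDiffAt.isSymmSndFDerivAt
          (by simp only [minSmoothness_of_isRCLikeNormedField]; norm_num)) (1, 0) (0, 1)
      rw [hsym, om_antisymm (fderiv ℝ V (s, t) (1, 0))]
      simp [omL_apply]
      ring
    rw [integral_eq_sub_of_hasDerivAt hd]
    · have p1 : V (s, 1) = V (s, 0) := by simpa using hper s 0
      have p2 : fderiv ℝ V (s, 1) (1, 0) = fderiv ℝ V (s, 0) (1, 0) := by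
        refine (deriv_fst V hVd s 1).unique ?_
        have := deriv_fst V hVd s 0
        convert this using 2 with σ
        simpa using hper σ 0
      rw [p1, p2, sub_self]
    · simp only [← omL_apply]
      exact (by fun_prop : Continuous _).intervalIntegrable _ _
  simp only [hcomp]
  have hc1 : Continuous fun t => om (V (s, t)) (fderiv ℝ (fderiv ℝ V) (s, t) (1, 0) (0, 1)) := by
    simp only [← omL_apply]; fun_prop
  have hc2 : Continuous fun t => om (fderiv ℝ V (s, t) (1, 0)) (fderiv ℝ V (s, t) (0, 1)) := by
    simp only [← omL_apply]; fun_prop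
  rw [integral_sub (hc1.intervalIntegrable _ _) (hc2.intervalIntegrable _ _)] at hbd
  rw [intervalIntegral.integral_const_mul, integral_add (hc1.intervalIntegrable _ _)
    (hc2.intervalIntegrable _ _)]
  linarith

lemma ham_deriv {n : ℕ} (V : ℝ × ℝ → E n) (hV : ContDiff ℝ (⊤ : ℕ∞) V) (Hs : ℝ → E n → ℝ)
    (hH : ContDiff ℝ (⊤ : ℕ∞) (fun p : ℝ × E n => Hs p.1 p.2)) (s : ℝ) :
    (Continuous fun p : ℝ × ℝ => deriv (fun σ => Hs σ (V p)) p.1) ∧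
    (Continuous fun p : ℝ × ℝ => fderiv ℝ (Hs p.1) (V p) (fderiv ℝ V p (1, 0))) ∧
    HasDerivAt (fun σ => ∫ t in (0:ℝ)..1, Hs σ (V (σ, t)))
      ((∫ t in (0:ℝ)..1, deriv (fun σ => Hs σ (V (s, t))) s) +
        ∫ t in (0:ℝ)..1, fderiv ℝ (Hs s) (V (s, t)) (fderiv ℝ V (s, t) (1, 0))) s := by
  have hVd : Differentiable ℝ V := hV.differentiable (by simp)
  have hVc := hV.continuous
  have hVc' : Continuous (fderiv ℝ V) := hV.continuous_fderiv (by simp)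
  set G : ℝ × E n → ℝ := fun p => Hs p.1 p.2 with hG
  have hGd : Differentiable ℝ G := hH.differentiable (by simp)
  have hGc' : Continuous (fderiv ℝ G) := hH.continuous_fderiv (by simp)
  have d1 : ∀ s x, deriv (fun σ => Hs σ x) s = fderiv ℝ G (s, x) (1, 0) := fun s x =>
    (HasFDerivAt.comp_hasDerivAt (f := fun σ : ℝ => (σ, x)) s (hGd (s, x)).hasFDerivAt
      ((hasDerivAt_id s).prodMk (hasDerivAt_const s x))).deriv
  have d2 : ∀ s x u, fderiv ℝ (Hs s) x u = fderiv ℝ G (s, x) (0, u) := by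
    intro s x u
    have h : HasFDerivAt (Hs s) ((fderiv ℝ G (s, x)).comp (ContinuousLinearMap.inr ℝ ℝ (E n))) x :=
      (hGd (s, x)).hasFDerivAt.comp x (hasFDerivAt_prodMk_right s x)
    rw [h.fderiv]; simp
  have c1 : Continuous fun p : ℝ × ℝ => deriv (fun σ => Hs σ (V p)) p.1 := by
    simp only [d1]; fun_prop
  have c2 : Continuous fun p : ℝ × ℝ => fderiv ℝ (Hs p.1) (V p) (fderiv ℝ V p (1, 0)) := by
    simp only [d2]; fun_prop
  refine ⟨c1, c2, ?_⟩
  have hg : ContDiff ℝ 1 (fun p : ℝ × ℝ => G (p.1, V p)) :=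
    (hH.comp (contDiff_fst.prodMk hV)).of_le (by exact_mod_cast le_top)
  have h1 := hasDerivAt_param_integral _ hg s
  convert h1 using 1
  have i1 : Continuous fun t => deriv (fun σ => Hs σ (V (s, t))) s :=
    c1.comp (by fun_prop : Continuous fun t : ℝ => (s, t))
  have i2 : Continuous fun t => fderiv ℝ (Hs s) (V (s, t)) (fderiv ℝ V (s, t) (1, 0)) :=
    c2.comp (by fun_prop : Continuous fun t : ℝ => (s, t))
  rw [← integral_add (i1.intervalIntegrable _ _) (i2.intervalIntegrable _ _)]
  congr 1; ext t
  have e1 := deriv_fst _ (hg.differentiable one_ne_zero) s t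
  have e2 : HasDerivAt (fun σ => G (σ, V (σ, t)))
      (fderiv ℝ G (s, V (s, t)) (1, fderiv ℝ V (s, t) (1, 0))) s :=
    HasFDerivAt.comp_hasDerivAt (f := fun σ : ℝ => (σ, V (σ, t))) s
      (hGd (s, V (s, t))).hasFDerivAt ((hasDerivAt_id s).prodMk (deriv_fst V hVd s t))
  rw [e1.unique e2, d1, d2, ← map_add]
  simp

/-- The energy density bounds and the derivative of the action along a Floer trajectory. -/
lemma floer_action {n : ℕ} (Hs : ℝ → E n → ℝ) (Js : ℝ → ℝ → E n → ℝ → (E n →L[ℝ] E n)) (JN : ℝ)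
    (hhom : IsHomotopy Hs Js) (hJN : JBound Js JN)
    (v : ℝ → ℝ → E n) (η : ℝ → ℝ) (hu : FloerTraj Hs Js v η) :
    ∃ e d : ℝ → ℝ, Continuous e ∧ Continuous d ∧
      (∀ s, HasDerivAt (fun σ => RabAction (Hs σ) (v σ) (η σ)) (e s - η s * d s) s) ∧
      (∀ s, d s = ∫ t in (0:ℝ)..1, deriv (fun σ => Hs σ (v s t)) s) ∧
      (∀ s, JN⁻¹ * (L2 (fun t => deriv (v s) t - η s • XH (Hs s) (v s t))) ^ 2
        + (deriv η s) ^ 2 ≤ e s) ∧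
      (∀ s, (L2 (fun t => deriv (fun σ => v σ t) s)) ^ 2 + (deriv η s) ^ 2 ≤ JN * e s) := by
  obtain ⟨hH, hJ, -, -, hcompat⟩ := hhom
  obtain ⟨hV, hη, hloop, hfl, hfe⟩ := hu
  obtain ⟨hJN1, hJNb⟩ := hJN
  set V : ℝ × ℝ → E n := fun p => v p.1 p.2 with hVdef
  have hVd : Differentiable ℝ V := hV.differentiable (by simp)
  have hVc : Continuous V := hV.continuous
  have hVc' : Continuous (fderiv ℝ V) := hV.continuous_fderiv (by simp)
  have hηd : Differentiable ℝ η := hη.differentiable (by simp)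
  have hηc := hη.continuous
  have hηc' : Continuous (deriv η) := hη.continuous_deriv (by exact_mod_cast le_top)
  have ds : ∀ s t, deriv (fun σ => v σ t) s = fderiv ℝ V (s, t) (1, 0) := fun s t =>
    (deriv_fst V hVd s t).deriv
  have dt : ∀ s t, deriv (v s) t = fderiv ℝ V (s, t) (0, 1) := fun s t =>
    (deriv_snd V hVd s t).deriv
  -- the vector field `w = J ∂ₛv`
  have hw : ∀ s t, deriv (v s) t - η s • XH (Hs s) (v s t)
      = Js s t (v s t) (η s) (fderiv ℝ V (s, t) (1, 0)) := by
    intro s t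
    rw [← ds, hfl, map_neg, (hcompat _ _ _ _).1, neg_neg]
  have hJc : Continuous (fun p : ℝ × ℝ => Js p.1 p.2 (V p) (η p.1)) :=
    hJ.continuous.comp (by fun_prop : Continuous fun p : ℝ × ℝ => (p.1, p.2, V p, η p.1))
  have hwc : Continuous (fun p : ℝ × ℝ =>
      Js p.1 p.2 (V p) (η p.1) (fderiv ℝ V p (1, 0))) := by fun_prop
  have hec : Continuous (fun p : ℝ × ℝ => om (fderiv ℝ V p (1, 0))
      (Js p.1 p.2 (V p) (η p.1) (fderiv ℝ V p (1, 0)))) := by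
    simp only [← omL_apply]; fun_prop
  have hec1 : ∀ s, Continuous (fun t => om (fderiv ℝ V (s, t) (1, 0))
      (Js s t (v s t) (η s) (fderiv ℝ V (s, t) (1, 0)))) := fun s =>
    hec.comp (by fun_prop : Continuous fun t : ℝ => (s, t))
  have hwc1 : ∀ s, Continuous (fun t => Js s t (v s t) (η s) (fderiv ℝ V (s, t) (1, 0))) := fun s =>
    hwc.comp (by fun_prop : Continuous fun t : ℝ => (s, t))
  have hdc := fun s => (ham_deriv V hV Hs hH s)
  have hL2 : ∀ z : ℝ → E n, L2 z ^ 2 = ∫ t in (0:ℝ)..1, ‖z t‖ ^ 2 := fun z => by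
    unfold L2
    exact Real.sq_sqrt (integral_nonneg zero_le_one fun t _ => by positivity)
  refine ⟨fun s => (∫ t in (0:ℝ)..1, om (fderiv ℝ V (s, t) (1, 0))
      (Js s t (v s t) (η s) (fderiv ℝ V (s, t) (1, 0)))) + (deriv η s) ^ 2,
    fun s => ∫ t in (0:ℝ)..1, deriv (fun σ => Hs σ (v s t)) s, ?_, ?_, ?_, fun _ => rfl, ?_, ?_⟩
  · exact (continuous_parametric_intervalIntegral_of_continuous' hec 0 1).add (hηc'.pow 2)
  · exact continuous_parametric_intervalIntegral_of_continuous' (hdc 0).1 0 1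
  · intro s
    have hper : ∀ s t, V (s, t + 1) = V (s, t) := fun s t => (hloop s).2 t
    have h1 := area_deriv V hV hper s
    have h2 := (hηd s).hasDerivAt.mul (hdc s).2.2
    have h3 := h1.sub h2
    unfold RabAction
    simp only [dt]
    refine h3.congr_deriv ?_
    have hq : ∫ t in (0:ℝ)..1, Hs s (V (s, t)) = - deriv η s := by rw [hfe s]; simp [hVdef]
    rw [hq]
    have i1 : Continuous fun t => om (fderiv ℝ V (s, t) (1, 0)) (fderiv ℝ V (s, t) (0, 1)) := by
      simp only [← omL_apply]; fun_prop
    have i2 : Continuous fun t => fderiv ℝ (Hs s) (V (s, t)) (fderiv ℝ V (s, t) (1, 0)) :=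
      (hdc s).2.1.comp (by fun_prop : Continuous fun t : ℝ => (s, t))
    have i3 : Continuous fun t =>
        η s * fderiv ℝ (Hs s) (V (s, t)) (fderiv ℝ V (s, t) (1, 0)) := continuous_const.mul i2
    have h4 : (∫ t in (0:ℝ)..1, om (fderiv ℝ V (s, t) (1, 0))
        (Js s t (v s t) (η s) (fderiv ℝ V (s, t) (1, 0))))
        = (∫ t in (0:ℝ)..1, om (fderiv ℝ V (s, t) (1, 0)) (fderiv ℝ V (s, t) (0, 1)))
          - η s * ∫ t in (0:ℝ)..1, fderiv ℝ (Hs s) (V (s, t)) (fderiv ℝ V (s, t) (1, 0)) := by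
      rw [← intervalIntegral.integral_const_mul, ← integral_sub (i1.intervalIntegrable _ _)
        (i3.intervalIntegrable _ _)]
      congr 1; ext t
      rw [← hw, dt, ← om_XH, ← omL_apply, map_sub, map_smul, omL_apply, omL_apply, smul_eq_mul]
    rw [h4]
    simp only [hVdef]
    ring
  · intro s
    simp only [hw, hL2]
    gcongr
    rw [← intervalIntegral.integral_const_mul]
    refine integral_mono zero_le_one (((hwc1 s).norm.pow 2).const_mul _ |>.intervalIntegrable _ _)
      ((hec1 s).intervalIntegrable _ _) fun t => ?_
    have hb := (hJNb s t (v s t) (η s) (Js s t (v s t) (η s) (fderiv ℝ V (s, t) (1, 0)))).1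
    rw [(hcompat _ _ _ _).2.1] at hb
    exact hb
  · intro s
    simp only [ds, hL2]
    have hd : Continuous fun t => fderiv ℝ V (s, t) (1, 0) := by fun_prop
    rw [mul_add, ← intervalIntegral.integral_const_mul]
    have hsq : deriv η s ^ 2 ≤ JN * deriv η s ^ 2 := le_mul_of_one_le_left (sq_nonneg _) hJN1
    refine add_le_add ?_ hsq
    refine integral_mono zero_le_one ((hd.norm.pow 2).intervalIntegrable _ _)
      (((hec1 s).const_mul _).intervalIntegrable _ _) fun t => ?_
    have hb := (hJNb s t (v s t) (η s) (fderiv ℝ V (s, t) (1, 0))).1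
    rwa [inv_mul_le_iff₀ (by linarith)] at hb

/-- **Proposition 3.3 (uniform bounds on multiplier, action and energy along Floer
trajectories of a homotopy).** -/
theorem uniform_bounds_along_Floer_trajectories {n : ℕ} (HH : E n → ℝ) (K : Set (E n))
    (hK : IsCompact K) (hKne : K.Nonempty)
    (c₁ c₂ c₃ L c₄ c₅ ν M h₁ : ℝ)
    (hc₁ : 0 < c₁) (hc₂ : 0 < c₂) (hc₃ : 0 ≤ c₃) (hL : 0 ≤ L)
    (hc₄ : 0 < c₄) (hc₅ : 0 < c₅) (hν : 0 < ν) (hM : 0 < M) (hh₁ : 0 ≤ h₁)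
    (hHH : InFamily HH K c₁ c₂ c₃ L c₄ c₅ ν M h₁ HH)
    -- the homotopy
    (Hs : ℝ → E n → ℝ) (Js : ℝ → ℝ → E n → ℝ → (E n →L[ℝ] E n)) (JN D : ℝ)
    (hhom : IsHomotopy Hs Js)
    (hfam : ∀ s, InFamily HH K c₁ c₂ c₃ L c₄ c₅ ν M h₁ (Hs s))
    (hJN : JBound Js JN)
    (hD : dsHBound Hs D) (hD0 : 0 ≤ D)
    -- the constants ε₀, c̃ of the linearity property
    (ε₀ ctil : ℝ) (hε₀ : 0 < ε₀) (hctil : 0 < ctil)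
    (hlin : ∀ H, InFamily HH K c₁ c₂ c₃ L c₄ c₅ ν M h₁ H →
      ∀ (v : ℝ → E n) (η : ℝ), IsLoop v →
        gradNorm H v η < ε₀ → |η| ≤ ctil * (|RabAction H v η| + 1))
    (hsmall : (ctil + JN ^ ((3:ℝ)/2) / ε₀) * D < 1 / 8)
    -- the Floer trajectory and its asymptotic action bounds
    (v : ℝ → ℝ → E n) (η : ℝ → ℝ) (hu : FloerTraj Hs Js v η)
    (a b A B : ℝ)
    (hA : Filter.Tendsto (fun s => RabAction (Hs s) (v s) (η s)) Filter.atBot (nhds A))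
    (haA : a ≤ A)
    (hB : Filter.Tendsto (fun s => RabAction (Hs s) (v s) (η s)) Filter.atTop (nhds B))
    (hBb : B ≤ b) :
    (∀ s, |η s| ≤ (8/7) * (ctil * (max |a| |b| + 1) + ((b - a) / ε₀) * JN ^ ((3:ℝ)/2))) ∧
    (∀ s, |RabAction (Hs s) (v s) (η s)| ≤ (1/7) * (8 * max |a| |b| + 1 + |b - a|)) ∧
    (∫⁻ s : ℝ, ENNReal.ofReal
        ((L2 (fun t => deriv (fun σ => v σ t) s)) ^ 2 + (deriv η s) ^ 2)
      ≤ ENNReal.ofReal ((1/7) * JN * (8 * |b - a| + max |a| |b| + 1))) := by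

  obtain ⟨e, d, hec, hdc, hf, hd, he1, he2⟩ := floer_action Hs Js JN hhom hJN v η hu
  have hJ1 : 1 ≤ JN := hJN.1
  have hJ0 : 0 < JN := by linarith
  have hηC : ContDiff ℝ 1 η := hu.2.1.of_le (by exact_mod_cast le_top)
  have hloop := hu.2.2.1
  have hηe := hu.2.2.2.2
  have he0 : ∀ s, 0 ≤ e s := fun s => le_trans (by positivity) (he1 s)
  -- bounds on `d`
  have hd1 : ∀ s ∈ Icc (0:ℝ) 1, |d s| ≤ D := by
    intro s hs
    rw [hd]
    have := norm_integral_le_of_norm_le_const (a := (0:ℝ)) (b := 1) (C := D)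
      (f := fun t => deriv (fun σ => Hs σ (v s t)) s) (fun t _ => hD (v s t) s hs)
    simpa using this
  have hd0 : ∀ s ∉ Icc (0:ℝ) 1, d s = 0 := by
    intro s hs
    rw [hd]
    have hz : ∀ x, deriv (fun σ => Hs σ x) s = 0 := by
      intro x
      by_cases h : s < 0
      · have : (fun σ => Hs σ x) =ᶠ[𝓝 s] fun _ => Hs 0 x := by
          filter_upwards [Iio_mem_nhds h] with σ hσ
          rw [(hhom.2.2.1 σ (le_of_lt hσ)).1]
        rw [this.deriv_eq]; simp
      · have h' : 1 < s := by
          by_contra! h2; exact hs ⟨not_lt.1 h, h2⟩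
        have : (fun σ => Hs σ x) =ᶠ[𝓝 s] fun _ => Hs 1 x := by
          filter_upwards [Ioi_mem_nhds h'] with σ hσ
          rw [(hhom.2.2.2.1 σ (le_of_lt hσ)).1]
        rw [this.deriv_eq]; simp
    simp [hz]
  -- the maximum of `|η|` on `[0,1]`
  obtain ⟨s₀, hs₀, hmax⟩ := (isCompact_Icc (a := (0:ℝ)) (b := 1)).exists_isMaxOn
    ⟨0, le_rfl, zero_le_one⟩ hηC.continuous.abs.continuousOn
  set Y := |η s₀| with hY
  have hY0 : 0 ≤ Y := abs_nonneg _
  have hYs : ∀ s ∈ Icc (0:ℝ) 1, |η s| ≤ Y := fun s hs => hmax hs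
  obtain ⟨hact, hen⟩ := energy_abstract _ e (fun s => η s * d s) (D * Y) A B hec
    (hηC.continuous.mul hdc) hf he0
    (fun s hs => by
      rw [abs_mul, mul_comm]
      exact mul_le_mul (hd1 s hs) (hYs s hs) (abs_nonneg _) hD0)
    (fun s hs => by simp [hd0 s hs]) hA hB
  set m := max |a| |b| with hm
  have hma : |a| ≤ m := le_max_left _ _
  have hmb : |b| ≤ m := le_max_right _ _
  have hm0 : 0 ≤ m := (abs_nonneg a).trans hma
  have hact' : ∀ s, |RabAction (Hs s) (v s) (η s)| ≤ m + D * Y := by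
    intro s
    obtain ⟨h1, h2⟩ := hact s
    rw [abs_le]
    constructor
    · linarith [neg_abs_le a]
    · linarith [le_abs_self b]
  have hen' : ∀ x y, x ≤ y → ∫ s in x..y, e s ≤ b - a + D * Y := fun x y hxy =>
    (hen x y hxy).trans (by linarith)
  set κ := JN ^ ((3:ℝ)/2) / ε₀ with hκ
  have hJp : JN ≤ JN ^ ((3:ℝ)/2) := by
    conv_lhs => rw [← Real.rpow_one JN]
    exact Real.rpow_le_rpow_of_exponent_le hJ1 (by norm_num)
  have hκ0 : 0 ≤ κ := by positivity
  have hmain : ∀ s, |η s| ≤ ctil * (m + D * Y + 1) + κ * (b - a + D * Y) := by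
    refine eta_abstract η e _ κ (JN⁻¹ * (ε₀ ^ 2 / 2)) _ hηC hec (by positivity) hκ0 hen' ?_
    intro s hs
    have hg : ε₀ ≤ gradNorm (Hs s) (v s) (η s) := by
      by_contra! hlt
      have h1 := hlin (Hs s) (hfam s) (v s) (η s) (hloop s) hlt
      have h2 : ctil * (|RabAction (Hs s) (v s) (η s)| + 1) ≤ ctil * (m + D * Y + 1) := by
        gcongr; exact hact' s
      linarith
    have hq : |∫ t in (0:ℝ)..1, Hs s (v s t)| = |deriv η s| := by rw [hηe s, abs_neg]
    unfold gradNorm at hg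
    rw [hq] at hg
    have he := he1 s
    rw [← sq_abs (deriv η s)] at he
    set p := L2 (fun t => deriv (v s) t - η s • XH (Hs s) (v s t)) with hp
    set q := |deriv η s| with hqd
    have hp0 : 0 ≤ p := Real.sqrt_nonneg _
    have hq0 : 0 ≤ q := abs_nonneg _
    have hpq : p ^ 2 + q ^ 2 ≤ JN * e s := by
      have h1 : JN * (JN⁻¹ * p ^ 2 + q ^ 2) ≤ JN * e s := by gcongr
      rw [mul_add, mul_inv_cancel_left₀ hJ0.ne'] at h1
      nlinarith [sq_nonneg q]
    constructor
    · rw [inv_mul_le_iff₀ hJ0]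
      nlinarith [sq_nonneg (p - q)]
    · have h1 : q * ε₀ ≤ 2 * JN ^ ((3:ℝ)/2) * e s := by
        have h2 : q * ε₀ ≤ 2 * (JN * e s) := by nlinarith [sq_nonneg (p - q)]
        have h3 : JN * e s ≤ JN ^ ((3:ℝ)/2) * e s := by gcongr; exact he0 s
        linarith
      rw [hκ]
      rw [show 2 * (JN ^ ((3:ℝ)/2) / ε₀) * e s = (2 * JN ^ ((3:ℝ)/2) * e s) / ε₀ by ring]
      rwa [le_div_iff₀ hε₀]
  have hsm : (ctil + κ) * D * Y ≤ 1 / 8 * Y := by gcongr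
  have hfin : Y ≤ (8 / 7) * (ctil * (m + 1) + κ * (b - a)) := by
    have := hmain s₀
    rw [← hY] at this
    linarith
  have hDY : D * Y ≤ (1 / 7) * (m + 1 + |b - a|) := by
    have h1 : D * Y ≤ D * ((8 / 7) * (ctil * (m + 1) + κ * (b - a))) := by gcongr
    have h2 : D * (ctil * (m + 1) + κ * (b - a)) ≤ (ctil + κ) * D * (m + 1 + |b - a|) := by
      have a1 : 0 ≤ D * ctil * |b - a| := by positivity
      have a2 : 0 ≤ D * κ * (m + 1) := by positivity
      have a3 : D * κ * (b - a) ≤ D * κ * |b - a| := by gcongr; exact le_abs_self _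
      linarith
    have h3 : (ctil + κ) * D * (m + 1 + |b - a|) ≤ 1 / 8 * (m + 1 + |b - a|) := by gcongr
    linarith
  refine ⟨fun s => ?_, fun s => ?_, ?_⟩
  · rw [show (b - a) / ε₀ * JN ^ ((3:ℝ)/2) = κ * (b - a) by rw [hκ]; ring]
    have := hmain s
    linarith
  · linarith [hact' s]
  · have hW : ∀ x y, x ≤ y → ∫ s in x..y, e s ≤ (1 / 7) * (8 * |b - a| + m + 1) := fun x y hxy =>
      (hen' x y hxy).trans (by linarith [le_abs_self (b - a)])
    have hW0 : 0 ≤ (1 / 7) * (8 * |b - a| + m + 1) := by positivity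
    have hlint : ∫⁻ s : ℝ, ENNReal.ofReal (JN * e s)
        ≤ ENNReal.ofReal ((1/7) * JN * (8 * |b - a| + m + 1)) := by
      have hcover : AECover volume Filter.atTop (fun k : ℕ => Ioc (-(k:ℝ)) k) :=
        aecover_Ioc (Filter.tendsto_neg_atTop_atBot.comp tendsto_natCast_atTop_atTop)
          tendsto_natCast_atTop_atTop
      have hc : Continuous fun s => JN * e s := continuous_const.mul hec
      have hmeas : AEMeasurable (fun s => ENNReal.ofReal (JN * e s)) volume :=
        (ENNReal.continuous_ofReal.comp hc).measurable.aemeasurable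
      refine le_of_tendsto (hcover.lintegral_tendsto_of_countably_generated hmeas)
        (Filter.Eventually.of_forall fun k => ?_)
      have hk : -(k:ℝ) ≤ k := by linarith [Nat.cast_nonneg (α := ℝ) k]
      rw [← ofReal_integral_eq_lintegral_ofReal]
      · refine ENNReal.ofReal_le_ofReal ?_
        rw [← integral_of_le hk, intervalIntegral.integral_const_mul]
        have := mul_le_mul_of_nonneg_left (hW _ _ hk) hJ0.le
        linarith
      · exact (hc.intervalIntegrable _ _).1
      · exact Filter.Eventually.of_forall fun s => mul_nonneg hJ0.le (he0 s)
    exact (lintegral_mono fun s => ENNReal.ofReal_le_ofReal (he2 s)).trans hlint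
end
end

section
/- Uniform local connectedness of the level set (Step 1 in the proof of Lemma A.2): Let H:ℝ^m→ℝ be a C² function with Σ:=H⁻¹(0) nonempty, inf_{x∈Σ}‖∇H(x)‖>0 and sup_{x∈ℝ^m}‖D²H_x‖≤M for some 0<M<∞. Then for every x∈Σ the intersection B(x, (1/M)·inf_{z∈Σ}‖∇H(z)‖) ∩ Σ is connected, i.e. has exactly one connected component. -/
open Set

noncomputable section

/-- **Step 1 in the proof of Lemma A.2 (uniform local connectedness of the level set).**
For every `x ∈ Σ = H⁻¹(0)`, the intersection of `Σ` with the ball of radius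
`(1/M)·inf_Σ‖∇H‖` centred at `x` has exactly one connected component. -/
theorem level_set_uniformly_locally_connected {m : ℕ}
    (H : EuclideanSpace ℝ (Fin m) → ℝ) (hH : ContDiff ℝ 2 H)
    (hne : (H ⁻¹' {0}).Nonempty)
    (hgrad : 0 < sInf ((fun x => ‖gradient H x‖) '' (H ⁻¹' {0})))
    (M : ℝ) (hM : 0 < M) (hMfin : ∀ x, ‖iteratedFDeriv ℝ 2 H x‖ ≤ M) :
    ∀ x, H x = 0 →
      IsConnected
        (Metric.ball x ((1 / M) * sInf ((fun z => ‖gradient H z‖) '' (H ⁻¹' {0})))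
          ∩ H ⁻¹' {0}) := by
  intro x hx
  set g := sInf ((fun z => ‖gradient H z‖) '' (H ⁻¹' {0})) with hg
  have hgn : ∀ z, ‖gradient H z‖ = ‖fderiv ℝ H z‖ := fun z => by
    simp [gradient]
  have hgle : ∀ z, H z = 0 → g ≤ ‖fderiv ℝ H z‖ := by
    intro z hz
    rw [← hgn]
    exact csInf_le ⟨0, by rintro _ ⟨w, _, rfl⟩; exact norm_nonneg _⟩ ⟨z, hz, rfl⟩
  have hR : 0 < (1 / M) * g := by positivity
  have hd2 : ∀ z, ‖fderiv ℝ (fderiv ℝ H) z‖ ≤ M := by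
    intro z
    rw [← norm_iteratedFDeriv_one, norm_iteratedFDeriv_fderiv]
    exact hMfin z
  have hdiff : Differentiable ℝ H := hH.differentiable (by norm_num)
  have hdd : Differentiable ℝ (fderiv ℝ H) :=
    (hH.fderiv_right (m := 1) (by norm_num)).differentiable (by norm_num)
  have hlip : ∀ y z, ‖fderiv ℝ H z - fderiv ℝ H y‖ ≤ M * ‖z - y‖ := fun y z =>
    convex_univ.norm_image_sub_le_of_norm_fderiv_le (fun w _ => hdd w) (fun w _ => hd2 w)
      (mem_univ y) (mem_univ z)
  have htay : ∀ y z, ‖H z - H y - fderiv ℝ H y (z - y)‖ ≤ M * ‖z - y‖ * ‖z - y‖ := by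
    intro y z
    refine (convex_closedBall y ‖z - y‖).norm_image_sub_le_of_norm_fderiv_le'
      (fun w _ => hdiff w) (fun w hw => ?_) ?_ ?_
    · refine (hlip y w).trans ?_
      rw [Metric.mem_closedBall, dist_eq_norm] at hw
      gcongr
    · simp
    · simp [dist_eq_norm]
  -- no constrained local minimum of the distance other than `x`
  have hcrit : ∀ y, H y = 0 → y ≠ x → ‖y - x‖ < (1 / M) * g →
      ¬ IsLocalMinOn (fun z => ‖z - x‖ ^ 2) {z | H z = H y} y := by
    intro y hy hyx hyR hmin
    have hf' : HasStrictFDerivAt H (fderiv ℝ H y) y :=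
      hH.contDiffAt.hasStrictFDerivAt (by norm_num)
    have hφ' : HasStrictFDerivAt (fun z => ‖z - x‖ ^ 2) (2 • innerSL ℝ (y - x)) y := by
      have h := (hasStrictFDerivAt_norm_sq (y - x)).comp y
        ((hasStrictFDerivAt_id y).sub_const x)
      simpa using h
    obtain ⟨a, b, hab, h0⟩ := IsLocalExtrOn.exists_multipliers_of_hasStrictFDerivAt_1d
      (Or.inl hmin) hf' hφ'
    have hpos : 0 < ‖y - x‖ := norm_pos_iff.2 (sub_ne_zero.2 hyx)
    have ha : a ≠ 0 := by
      rintro rfl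
      have hb : b ≠ 0 := by rintro rfl; exact hab rfl
      have := congrArg (fun L => L (y - x)) h0
      simp [hb] at this
      rw [← inner_sub_left, real_inner_self_eq_norm_sq] at this
      exact (pow_pos hpos 2).ne' this
    obtain ⟨c, hc⟩ : ∃ c : ℝ, fderiv ℝ H y = c • innerSL ℝ (y - x) := by
      refine ⟨-(a⁻¹ * b * 2), ?_⟩
      ext v
      have := congrArg (fun L => L v) h0
      simp at this ⊢
      field_simp
      linarith
    have h1 := htay y x
    have h2 : fderiv ℝ H y (x - y) = -(c * ‖y - x‖ ^ 2) := by
      rw [hc, ← neg_sub y x, map_neg, ContinuousLinearMap.smul_apply, innerSL_apply_apply,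
        real_inner_self_eq_norm_sq, smul_eq_mul]
    have h3 : ‖fderiv ℝ H y‖ = |c| * ‖y - x‖ := by
      rw [hc, norm_smul, innerSL_apply_norm, Real.norm_eq_abs]
    rw [h2, hx, hy, norm_sub_rev x y] at h1
    have h4 : |c| * ‖y - x‖ ^ 2 ≤ M * ‖y - x‖ * ‖y - x‖ := by
      simpa [abs_mul] using h1
    have h5 : ‖fderiv ℝ H y‖ ≤ M * ‖y - x‖ := by
      rw [h3]
      refine le_of_mul_le_mul_right ?_ hpos
      nlinarith
    have h6 := hgle y hy
    have h7 : M * ‖y - x‖ < g := by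
      have := mul_lt_mul_of_pos_left hyR hM
      rwa [← mul_assoc, mul_one_div_cancel hM.ne', one_mul] at this
    linarith
  have key : ∀ u v : Set (EuclideanSpace ℝ (Fin m)), IsOpen u → IsOpen v →
      Metric.ball x ((1 / M) * g) ∩ H ⁻¹' {0} ⊆ u ∪ v → x ∈ u →
      ((Metric.ball x ((1 / M) * g) ∩ H ⁻¹' {0}) ∩ v).Nonempty →
      ((Metric.ball x ((1 / M) * g) ∩ H ⁻¹' {0}) ∩ (u ∩ v)).Nonempty := by
    intro u v hu hv hsub hxu hnv
    by_contra hemp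
    have hdis : ∀ z ∈ Metric.ball x ((1 / M) * g), H z = 0 → z ∈ u → z ∉ v :=
      fun z hz hz0 hzu hzv => hemp ⟨z, ⟨hz, hz0⟩, hzu, hzv⟩
    obtain ⟨y, ⟨hyb, hy0⟩, hyv⟩ := hnv
    have hyb' : dist y x < (1 / M) * g := hyb
    have hK : IsCompact (Metric.closedBall x (dist y x) ∩ (H ⁻¹' {0} ∩ uᶜ)) :=
      (isCompact_closedBall _ _).inter_right
        ((isClosed_singleton.preimage hH.continuous).inter hu.isClosed_compl)
    obtain ⟨w, ⟨hwb, hw0, hwu⟩, hwmin⟩ := hK.exists_isMinOn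
      ⟨y, by simp, hy0, fun h => hdis y hyb hy0 h hyv⟩
      (f := fun z => ‖z - x‖ ^ 2) (by fun_prop)
    have hwR : dist w x < (1 / M) * g := lt_of_le_of_lt hwb hyb'
    have hwv : w ∈ v := (hsub ⟨hwR, hw0⟩).resolve_left hwu
    refine hcrit w hw0 (fun h => hwu (h ▸ hxu)) (by rwa [← dist_eq_norm]) ?_
    have hev : ∀ᶠ z in nhdsWithin w {z | H z = H w},
        z ∈ Metric.ball x ((1 / M) * g) ∩ v :=
      nhdsWithin_le_nhds ((Metric.isOpen_ball.inter hv).mem_nhds ⟨hwR, hwv⟩)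
    filter_upwards [hev, self_mem_nhdsWithin] with z hz hzw
    have hz0 : H z = 0 := (show H z = H w from hzw).trans hw0
    by_cases hzy : dist z x ≤ dist y x
    · exact hwmin ⟨hzy, hz0, fun h => hdis z hz.1 hz0 h hz.2⟩
    · have h1 : dist w x ≤ dist z x := le_trans hwb (not_le.1 hzy).le
      rw [dist_eq_norm, dist_eq_norm] at h1
      show ‖w - x‖ ^ 2 ≤ ‖z - x‖ ^ 2
      gcongr
  have hxS : x ∈ Metric.ball x ((1 / M) * g) ∩ H ⁻¹' {0} := ⟨Metric.mem_ball_self hR, hx⟩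
  refine ⟨⟨x, hxS⟩, ?_⟩
  intro u v hu hv hsub hnu hnv
  rcases hsub hxS with h | h
  · exact key u v hu hv hsub h hnv
  · rw [inter_comm u v]
    exact key v u hv hu (by rwa [union_comm]) h hnu
end
end
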